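/- arXiv:1704.07111 — 2 statements merged into one kernel-verified Lean document; each statement's English description precedes it below -/
import Mathlib

section
/- Let G be a connected graph and T, T' ⊆ V(G) with T △ T' finite of even cardinality. If G contains a T-join, then G contains a T'-join. -/
namespace SimpleGraph

variable {V : Type*}

/-- A `T`-join in `G`: a set `P` of (oriented) paths, pairwise edge-disjoint, each with two
distinct endpoints lying in `T`, such that every vertex of `T` is an endpoint of exactly one
path of `P`. -/
def IsTJoin (G : SimpleGraph V) (T : Set V) (P : Set (Σ u : V, Σ v : V, G.Walk u v)) : Prop :=
  (∀ p ∈ P, p.2.2.IsPath ∧ p.1 ≠ p.2.1 ∧ p.1 ∈ T ∧ p.2.1 ∈ T) ∧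
  (∀ p ∈ P, ∀ q ∈ P, p ≠ q → ∀ e ∈ p.2.2.edges, e ∉ q.2.2.edges) ∧
  (∀ t ∈ T, ∃! p, p ∈ P ∧ (p.1 = t ∨ p.2.1 = t))

/-- `G` contains a `T`-join. -/
def HasTJoin (G : SimpleGraph V) (T : Set V) : Prop := ∃ P, G.IsTJoin T P

end SimpleGraph

namespace SimpleGraph
namespace TJoinAux

/-- `G` has a `T`-join using only edges of `E`. -/
def J {V : Type*} (G : SimpleGraph V) (T : Set V) (E : Set (Sym2 V)) : Prop :=
  ∃ P, G.IsTJoin T P ∧ ∀ p ∈ P, ∀ e ∈ p.2.2.edges, e ∈ E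

variable {V : Type*} {G : SimpleGraph V}

theorem J.mono {T : Set V} {E E' : Set (Sym2 V)} (h : J G T E) (hE : E ⊆ E') : J G T E' := by
  obtain ⟨P, hP, h⟩ := h
  exact ⟨P, hP, fun p hp e he => hE (h p hp e he)⟩

/-- Remove one path of the join. -/
theorem removeP {T : Set V} {E : Set (Sym2 V)} {P : Set (Σ u : V, Σ v : V, G.Walk u v)}
    (hP : G.IsTJoin T P) (hE : ∀ p ∈ P, ∀ e ∈ p.2.2.edges, e ∈ E)
    {p : Σ u : V, Σ v : V, G.Walk u v} (hp : p ∈ P) :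
    J G (T \ {p.1, p.2.1}) (E \ {e | e ∈ p.2.2.edges}) := by
  obtain ⟨h1, h2, h3⟩ := hP
  refine ⟨P \ {p}, ⟨?_, ?_, ?_⟩, ?_⟩
  · rintro q ⟨hq, hqp⟩
    obtain ⟨a, b, c, d⟩ := h1 q hq
    obtain ⟨a', b', c', d'⟩ := h1 p hp
    have u1 := (h3 _ c').unique ⟨hp, Or.inl rfl⟩ (y₂ := q)
    have u2 := (h3 _ d').unique ⟨hp, Or.inr rfl⟩ (y₂ := q)
    have hne : p ≠ q := fun h => hqp h.symm
    refine ⟨a, b, ⟨c, ?_⟩, ⟨d, ?_⟩⟩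
    · rintro (h | h)
      · exact hne (u1 ⟨hq, Or.inl h⟩)
      · exact hne (u2 ⟨hq, Or.inl h⟩)
    · rintro (h | h)
      · exact hne (u1 ⟨hq, Or.inr h⟩)
      · exact hne (u2 ⟨hq, Or.inr h⟩)
  · rintro q ⟨hq, -⟩ r ⟨hr, -⟩
    exact h2 q hq r hr
  · rintro t ⟨ht, hn⟩
    obtain ⟨q, ⟨hq, hqt⟩, hu⟩ := h3 t ht
    refine ⟨q, ⟨⟨hq, ?_⟩, hqt⟩, ?_⟩
    · rintro rfl
      apply hn
      rcases hqt with h | h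
      · exact Or.inl h.symm
      · exact Or.inr h.symm
    · rintro r ⟨⟨hr, -⟩, hrt⟩
      exact hu r ⟨hr, hrt⟩
  · rintro q ⟨hq, hqp⟩ e he
    exact ⟨hE q hq e he, h2 q hq p hp hqp e he⟩

theorem J.remove {T : Set V} {E : Set (Sym2 V)} (h : J G T E) {x : V} (hx : x ∈ T) :
    ∃ b ∈ T, b ≠ x ∧ ∃ w : G.Walk x b, (∀ e ∈ w.edges, e ∈ E) ∧
      J G (T \ {x, b}) (E \ {e | e ∈ w.edges}) := by
  obtain ⟨P, hP, hE⟩ := h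
  obtain ⟨p, ⟨hp, hpx⟩, -⟩ := hP.2.2 x hx
  have hr := removeP hP hE hp
  obtain ⟨-, hne, ha, hb⟩ := hP.1 p hp
  have hEp := hE p hp
  obtain ⟨a, b, w⟩ := p
  rcases hpx with h | h
  · simp only at h hr hne ha hb hEp
    subst h
    exact ⟨b, hb, hne.symm, w, hEp, hr⟩
  · simp only at h hr hne ha hb hEp
    subst h
    refine ⟨a, ha, hne, w.reverse, by simpa using hEp, ?_⟩
    rw [Set.pair_comm]
    simpa using hr

theorem J.add {T : Set V} {E : Set (Sym2 V)} (h : J G T E) {a b : V} (hab : a ≠ b)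
    (ha : a ∉ T) (hb : b ∉ T) (w : G.Walk a b) (hw : ∀ e ∈ w.edges, e ∉ E) :
    J G (T ∪ {a, b}) (E ∪ {e | e ∈ w.edges}) := by
  classical
  obtain ⟨P, ⟨h1, h2, h3⟩, hE⟩ := h
  have hsub : ∀ e ∈ w.bypass.edges, e ∈ w.edges := fun e he => w.edges_bypass_subset_edges he
  refine ⟨insert ⟨a, b, w.bypass⟩ P, ⟨?_, ?_, ?_⟩, ?_⟩
  · rintro p (rfl | hp)
    · exact ⟨w.bypass_isPath, hab, by simp, by simp⟩
    · obtain ⟨i, j, k, l⟩ := h1 p hp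
      exact ⟨i, j, Or.inl k, Or.inl l⟩
  · rintro p (rfl | hp) q (rfl | hq) hpq e he he'
    · exact hpq rfl
    · exact hw e (hsub e he) (hE q hq e he')
    · exact hw e (hsub e he') (hE p hp e he)
    · exact h2 p hp q hq hpq e he he'
  · have key : ∀ t, t = a ∨ t = b → ∃! p, p ∈ insert (⟨a, b, w.bypass⟩ : Σ u : V, Σ v : V, G.Walk u v) P ∧
        (p.1 = t ∨ p.2.1 = t) := by
      intro t ht
      refine ⟨⟨a, b, w.bypass⟩, ⟨Or.inl rfl, ?_⟩, ?_⟩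
      · rcases ht with h | h
        · exact Or.inl h.symm
        · exact Or.inr h.symm
      · rintro q ⟨rfl | hq, hqt⟩
        · rfl
        · exfalso
          obtain ⟨-, -, k, l⟩ := h1 q hq
          have : t ∈ T := by rcases hqt with h | h <;> rw [← h] <;> assumption
          rcases ht with rfl | rfl <;> contradiction
    rintro t (ht | ht)
    · obtain ⟨q, ⟨hq, hqt⟩, hu⟩ := h3 t ht
      refine ⟨q, ⟨Or.inr hq, hqt⟩, ?_⟩
      rintro r ⟨rfl | hr, hrt⟩
      · exfalso
        rcases hrt with h | h
        · exact ha (by simp only at h; rwa [h])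
        · exact hb (by simp only at h; rwa [h])
      · exact hu r ⟨hr, hrt⟩
    · exact key t ht
  · rintro p (rfl | hp) e he
    · exact Or.inr (hsub e he)
    · exact Or.inl (hE p hp e he)

theorem J.congr {T T' : Set V} {E E' : Set (Sym2 V)} (h : J G T E) (hT : ∀ t, t ∈ T ↔ t ∈ T')
    (hE : ∀ e ∈ E, e ∈ E') : J G T' E' := by
  have : T = T' := Set.ext hT
  subst this
  exact h.mono hE

theorem J.key {T : Set V} {E : Set (Sym2 V)} (h : J G T E) {x y : V} (hxy : G.Adj x y)
    (he : s(x, y) ∉ E) : J G (symmDiff T (symmDiff {x} {y})) (insert s(x, y) E) := by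
  have hne := hxy.ne
  -- the case of exactly one end in `T`
  have one : ∀ x y : V, G.Adj x y → s(x, y) ∉ E → x ∈ T → y ∉ T →
      J G (symmDiff T (symmDiff {x} {y})) (insert s(x, y) E) := by
    intro x y hxy he hx hy
    have hne := hxy.ne
    obtain ⟨b, hb, hbx, w, hw, hJ⟩ := h.remove hx
    have hby : b ≠ y := fun h => hy (h ▸ hb)
    refine (hJ.add (a := y) (b := b) hby.symm (fun h => hy h.1) (by simp)
      (Walk.cons hxy.symm w) ?_).congr ?_ ?_
    · intro e h'
      rw [Walk.edges_cons, List.mem_cons, Sym2.eq_swap] at h'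
      rintro ⟨h1, h2⟩
      rcases h' with rfl | h'
      · exact he h1
      · exact h2 h'
    · intro t
      simp only [Set.mem_symmDiff, Set.mem_union, Set.mem_sdiff, Set.mem_insert_iff,
        Set.mem_singleton_iff]
      grind
    · intro e h'
      simp only [Walk.edges_cons, List.mem_cons, Set.mem_union, Set.mem_sdiff, Set.mem_ofPred_eq,
        Set.mem_insert_iff] at h' ⊢
      rw [Sym2.eq_swap (a := x)]
      grind
  by_cases hx : x ∈ T <;> by_cases hy : y ∈ T
  · obtain ⟨b, hb, hbx, w, hw, hJ⟩ := h.remove hx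
    by_cases hby : b = y
    · subst hby
      refine hJ.congr ?_ ?_
      · intro t
        simp only [Set.mem_symmDiff, Set.mem_sdiff, Set.mem_insert_iff,
          Set.mem_singleton_iff]
        grind
      · intro e h'
        exact Or.inr h'.1
    · obtain ⟨c, hc, hcy, w', hw', hJ'⟩ := hJ.remove (x := y) (by
        simp only [Set.mem_sdiff, Set.mem_insert_iff, Set.mem_singleton_iff]; grind)
      simp only [Set.mem_sdiff, Set.mem_insert_iff, Set.mem_singleton_iff] at hc
      refine (hJ'.add (a := b) (b := c) (by grind) (by simp) (by simp)
        (w.reverse.append (Walk.cons hxy w')) ?_).congr ?_ ?_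
      · intro e h'
        simp only [Walk.edges_append, Walk.edges_reverse, Walk.edges_cons, List.mem_append,
          List.mem_reverse, List.mem_cons] at h'
        rintro ⟨⟨h1, h2⟩, h3⟩
        rcases h' with h' | rfl | h'
        · exact h2 h'
        · exact he h1
        · exact h3 h'
      · intro t
        simp only [Set.mem_symmDiff, Set.mem_union, Set.mem_sdiff, Set.mem_insert_iff,
          Set.mem_singleton_iff]
        grind
      · intro e h'
        simp only [Walk.edges_append, Walk.edges_reverse, Walk.edges_cons, List.mem_append,
          List.mem_reverse, List.mem_cons, Set.mem_union, Set.mem_sdiff, Set.mem_ofPred_eq,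
          Set.mem_insert_iff] at h' hw' ⊢
        grind
  · exact one x y hxy he hx hy
  · have := one y x hxy.symm (by rwa [Sym2.eq_swap]) hy hx
    rwa [symmDiff_comm ({y} : Set V), Sym2.eq_swap] at this
  · refine (h.add (a := x) (b := y) hne hx hy (Walk.cons hxy Walk.nil) ?_).congr ?_ ?_
    · simpa using he
    · intro t
      simp only [Set.mem_symmDiff, Set.mem_union, Set.mem_insert_iff,
        Set.mem_singleton_iff]
      grind
    · intro e
      simp

theorem toggle_trans (T : Set V) (u v w : V) :
    symmDiff (symmDiff T (symmDiff {u} {v})) (symmDiff {v} {w}) =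
      symmDiff T (symmDiff {u} {w}) := by
  ext t
  simp only [Set.mem_symmDiff, Set.mem_singleton_iff]
  grind

theorem J.trail {u v : V} (w : G.Walk u v) : ∀ {T : Set V} {E : Set (Sym2 V)}, J G T E →
    w.IsTrail → (∀ e ∈ w.edges, e ∉ E) →
    J G (symmDiff T (symmDiff {u} {v})) (E ∪ {e | e ∈ w.edges}) := by
  induction w with
  | nil =>
    intro T E h _ _
    refine h.congr (by simp [Set.mem_symmDiff]) (fun e he => Or.inl he)
  | @cons a b c hab p ih =>
    intro T E h ht hE
    rw [Walk.isTrail_cons] at ht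
    simp only [Walk.edges_cons, List.mem_cons] at hE
    have := ih (h.key hab (hE _ (Or.inl rfl))) ht.1 (by
      rintro e he (rfl | h')
      · exact ht.2 he
      · exact hE e (Or.inr he) h')
    rw [toggle_trans] at this
    refine this.mono ?_
    intro e
    simp only [Walk.edges_cons, List.mem_cons, Set.mem_union, Set.mem_ofPred_eq,
      Set.mem_insert_iff]
    tauto

theorem J.trailSkip {u v : V} (w : G.Walk u v) (x y : V) :
    ∀ {T : Set V} {E : Set (Sym2 V)}, J G T E →
    w.IsTrail → (∀ e ∈ w.edges, e ∉ E) → s(x, y) ∈ w.edges →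
    J G (symmDiff (symmDiff T (symmDiff {u} {v})) (symmDiff {x} {y})) Set.univ := by
  induction w with
  | nil =>
    intro T E h _ _ h'
    simp at h'
  | @cons a b c hab p ih =>
    intro T E h ht hE hmem
    rw [Walk.isTrail_cons] at ht
    simp only [Walk.edges_cons, List.mem_cons] at hE hmem
    by_cases h0 : s(x, y) = s(a, b)
    · have h1 := J.trail p h ht.1 (fun e he => hE e (Or.inr he))
      have h2 : symmDiff ({x} : Set V) {y} = symmDiff {b} {a} := by
        rw [Sym2.eq_iff] at h0
        rcases h0 with ⟨rfl, rfl⟩ | ⟨rfl, rfl⟩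
        · rw [symmDiff_comm]
        · rfl
      rw [h2]
      refine h1.congr ?_ (by simp)
      intro t
      simp only [Set.mem_symmDiff, Set.mem_singleton_iff]
      grind
    · have := ih (h.key hab (hE _ (Or.inl rfl))) ht.1 (by
        rintro e he (rfl | h')
        · exact ht.2 he
        · exact hE e (Or.inr he) h') (by tauto)
      rwa [toggle_trans] at this

theorem J.step {T : Set V} (h : J G T Set.univ) {x y : V} (hxy : G.Adj x y) :
    J G (symmDiff T (symmDiff {x} {y})) Set.univ := by
  obtain ⟨P, hP, -⟩ := h
  by_cases hu : ∃ p ∈ P, s(x, y) ∈ p.2.2.edges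
  · obtain ⟨p, hp, hmem⟩ := hu
    have hr := removeP hP (E := Set.univ) (by simp) hp
    obtain ⟨h1, h2, h3, h4⟩ := hP.1 p hp
    have := J.trailSkip p.2.2 x y hr h1.isTrail (fun e he h => h.2 he) hmem
    refine this.congr ?_ (by simp)
    have hT : symmDiff (T \ {p.1, p.2.1}) (symmDiff {p.1} {p.2.1}) = T := by
      ext t
      simp only [Set.mem_symmDiff, Set.mem_sdiff, Set.mem_insert_iff, Set.mem_singleton_iff]
      grind
    rw [hT]
    simp
  · push Not at hu
    have : J G T {s(x, y)}ᶜ := ⟨P, hP, fun p hp e he h => hu p hp (by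
      rw [Set.mem_singleton_iff] at h; rwa [← h])⟩
    exact (this.key hxy (by simp)).mono (Set.subset_univ _)

theorem J.walk {u v : V} (w : G.Walk u v) : ∀ {T : Set V}, J G T Set.univ →
    J G (symmDiff T (symmDiff {u} {v})) Set.univ := by
  induction w with
  | nil => intro T h; exact h.congr (by simp [Set.mem_symmDiff]) (by simp)
  | @cons a b c hab p ih =>
    intro T h
    have := ih (h.step hab)
    rwa [toggle_trans] at this

theorem J.final (hG : G.Connected) (T' : Set V) (n : ℕ) : ∀ T : Set V, (symmDiff T T').Finite →
    (symmDiff T T').ncard = n + n → J G T Set.univ → J G T' Set.univ := by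
  induction n with
  | zero =>
    intro T hf hc h
    rw [Set.ncard_eq_zero hf] at hc
    have : T = T' := symmDiff_eq_bot.1 hc
    rwa [← this]
  | succ n ih =>
    intro T hf hc h
    obtain ⟨u, hu, v, hv, huv⟩ := (Set.one_lt_ncard hf).1 (by omega)
    obtain ⟨w⟩ := hG.preconnected u v
    have hD : symmDiff (symmDiff T (symmDiff {u} {v})) T' = (symmDiff T T' \ {u}) \ {v} := by
      ext t
      simp only [Set.mem_symmDiff, Set.mem_sdiff, Set.mem_singleton_iff] at hu hv ⊢
      grind
    refine ih _ ?_ ?_ (J.walk w h)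
    · rw [hD]
      exact (hf.subset Set.sdiff_subset).subset Set.sdiff_subset
    · rw [hD, Set.ncard_diff_singleton_of_mem (by exact ⟨hv, fun h => huv h.symm⟩),
        Set.ncard_diff_singleton_of_mem hu]
      omega

end TJoinAux
end SimpleGraph

/-- If `T △ T'` is finite of even cardinality and the connected graph `G` has a `T`-join,
then `G` has a `T'`-join. -/
theorem hasTJoin_of_hasTJoin_even_symmDiff {V : Type*} (G : SimpleGraph V)
    (hG : G.Connected) (T T' : Set V) (hfin : (symmDiff T T').Finite)
    (heven : Even (symmDiff T T').ncard) (hT : G.HasTJoin T) :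
    G.HasTJoin T' := by
  obtain ⟨P, hP⟩ := hT
  obtain ⟨n, hn⟩ := heven
  obtain ⟨Q, hQ, -⟩ := SimpleGraph.TJoinAux.J.final hG T' n T hfin hn ⟨P, hP, by simp⟩
  exact ⟨Q, hQ⟩
end

section
/- Let G be a connected graph and T, T' ⊆ V(G) with T △ T' finite. If G contains neither a T-join nor a T'-join, then |T △ T'| is even. -/
namespace TJ
open Relation

variable {V : Type*}

lemma exists_invol (s : Set V) (h : Even s.ncard) :
    ∃ σ : V → V, ∀ t ∈ s, σ t ∈ s ∧ σ t ≠ t ∧ σ (σ t) = t := by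
  classical
  have key : ∃ B : Type _, Nonempty (s ≃ B ⊕ B) := by
    by_cases hf : s.Finite
    · obtain ⟨k, hk⟩ := h
      have := hf.to_subtype
      refine ⟨ULift (Fin k), ⟨?_⟩⟩
      have h1 : Nat.card s = Nat.card (ULift.{_} (Fin k) ⊕ ULift.{_} (Fin k)) := by
        rw [Nat.card_sum]; simp [Nat.card_coe_set_eq, hk]
      exact (Finite.equivFin _).trans ((finCongr h1).trans (Finite.equivFin _).symm)
    · have : Infinite s := Set.infinite_coe_iff.mpr hf
      refine ⟨s, ?_⟩
      have := Cardinal.add_mk_eq_self (α := s)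
      rw [Cardinal.add_def] at this
      exact (Cardinal.eq.mp this).map Equiv.symm
  obtain ⟨B, ⟨e⟩⟩ := key
  refine ⟨fun t => if h : t ∈ s then (e.symm (e ⟨t, h⟩).swap : V) else t, ?_⟩
  intro t ht
  have hm : ((e.symm (e ⟨t, ht⟩).swap : s) : V) ∈ s := Subtype.coe_prop _
  refine ⟨by simp [ht], ?_, by simp [ht]⟩
  simp only [ht, dif_pos]
  intro h
  have : e.symm (e ⟨t, ht⟩).swap = ⟨t, ht⟩ := Subtype.ext h
  rw [Equiv.symm_apply_eq] at this
  cases h2 : e ⟨t, ht⟩ <;> rw [h2] at this <;> simp at this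

lemma gather (G : SimpleGraph V) (T : Set V) (l : V → V) (E : V → Set (Sym2 V))
    (hE : ∀ t ∈ T, ∀ t' ∈ T, ∀ e, e ∈ E t → e ∈ E t' → t = t')
    (hw : ∀ t ∈ T, ∃ w : G.Walk t (l t), ∀ e ∈ w.edges, e ∈ E t)
    (hfib : ∀ v, Even {t | t ∈ T ∧ l t = v}.ncard) : G.HasTJoin T := by
  classical
  have h1 := fun v => exists_invol _ (hfib v)
  choose σ' hσ' using h1
  let σ : V → V := fun t => σ' (l t) t
  have hσ : ∀ t ∈ T, σ t ∈ T ∧ σ t ≠ t ∧ σ (σ t) = t ∧ l (σ t) = l t := by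
    intro t ht
    obtain ⟨⟨a, b⟩, c, d⟩ := hσ' (l t) t ⟨ht, rfl⟩
    refine ⟨a, c, ?_, b⟩
    change σ' (l (σ' (l t) t)) (σ' (l t) t) = t
    rw [b]; exact d
  have hp : ∀ t ∈ T, ∃ w : G.Walk t (σ t), w.IsPath ∧ ∀ e ∈ w.edges, e ∈ E t ∨ e ∈ E (σ t) := by
    intro t ht
    obtain ⟨a, b, c, d⟩ := hσ t ht
    obtain ⟨w1, h1⟩ := hw t ht
    obtain ⟨w2, h2⟩ := hw _ a
    let w := w1.append (w2.reverse.copy d rfl)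
    refine ⟨w.bypass, w.bypass_isPath, ?_⟩
    intro e he
    have := w.edges_bypass_subset_edges he
    simp only [w, SimpleGraph.Walk.edges_append, SimpleGraph.Walk.edges_copy,
      SimpleGraph.Walk.edges_reverse, List.mem_append, List.mem_reverse] at this
    rcases this with h | h
    · exact Or.inl (h1 e h)
    · exact Or.inr (h2 e h)
  choose w hwp hwe using hp
  let _ : LinearOrder V := linearOrderOfSTO WellOrderingRel
  refine ⟨{p | ∃ (t : V) (ht : t ∈ T), t < σ t ∧ p = ⟨t, σ t, w t ht⟩}, ?_, ?_, ?_⟩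
  · rintro p ⟨t, ht, hlt, rfl⟩
    exact ⟨hwp t ht, hlt.ne, ht, (hσ t ht).1⟩
  · rintro p ⟨t, ht, hlt, rfl⟩ q ⟨t', ht', hlt', rfl⟩ hne e he he'
    have htt : t ≠ t' := by rintro rfl; exact hne rfl
    have hs := hσ t ht
    have hs' := hσ t' ht'
    rcases hwe t ht e he with h | h <;> rcases hwe t' ht' e he' with h' | h'
    · exact htt (hE _ ht _ ht' e h h')
    · have := hE _ ht _ hs'.1 e h h'
      rw [this, hs'.2.2.1] at hlt
      exact lt_asymm hlt hlt'
    · have := hE _ hs.1 _ ht' e h h'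
      rw [← this, hs.2.2.1] at hlt'
      exact lt_asymm hlt hlt'
    · have := hE _ hs.1 _ hs'.1 e h h'
      apply htt
      rw [← hs.2.2.1, this, hs'.2.2.1]
  · intro t ht
    have hs := hσ t ht
    rcases lt_or_gt_of_ne hs.2.1 with h | h
    · refine ⟨⟨σ t, σ (σ t), w (σ t) hs.1⟩, ⟨⟨σ t, hs.1, by rw [hs.2.2.1]; exact h, rfl⟩,
        Or.inr hs.2.2.1⟩, ?_⟩
      rintro q ⟨⟨t', ht', hlt', rfl⟩, h3⟩
      have hs' := hσ t' ht'
      simp only at h3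
      rcases h3 with rfl | h3
      · exact absurd hlt' (lt_asymm h)
      · have : t' = σ t := by rw [← h3, hs'.2.2.1]
        subst this; rfl
    · refine ⟨⟨t, σ t, w t ht⟩, ⟨⟨t, ht, h, rfl⟩, Or.inl rfl⟩, ?_⟩
      rintro q ⟨⟨t', ht', hlt', rfl⟩, h3⟩
      have hs' := hσ t' ht'
      simp only at h3
      rcases h3 with rfl | h3
      · rfl
      · subst h3
        rw [hs'.2.2.1] at h
        exact absurd hlt' (lt_asymm h)

lemma rank (Rl : V → V → Prop) (δ : V → ℕ) (hδ : ∀ y x, Rl y x → δ x < δ y) (X T : Set V)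
    (hX : ∀ x ∈ X, ∃ t ∈ T, ReflTransGen Rl t x) :
    ∃ (N : V → ℕ) (f : V → V), ∀ x ∈ X, x ∉ T → Rl (f x) x ∧ N (f x) < N x := by
  classical
  have hle : ∀ y x, ReflTransGen Rl y x → δ x ≤ δ y := by
    intro y x h
    induction h with
    | refl => exact le_rfl
    | tail _ h ih => exact (hδ _ _ h).le.trans ih
  let N : V → ℕ := fun x => sInf {k | ∃ t ∈ T, ReflTransGen Rl t x ∧ k = δ t - δ x}
  have : ∀ x ∈ X, x ∉ T → ∃ y, Rl y x ∧ N y < N x := by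
    intro x hx hxT
    obtain ⟨t0, h0, h0'⟩ := hX x hx
    have hne : {k | ∃ t ∈ T, ReflTransGen Rl t x ∧ k = δ t - δ x}.Nonempty := ⟨_, t0, h0, h0', rfl⟩
    obtain ⟨t, ht, htx, hk⟩ := Nat.sInf_mem hne
    rcases ReflTransGen.cases_tail htx with rfl | ⟨y, hy, hyx⟩
    · exact absurd ht hxT
    · refine ⟨y, hyx, ?_⟩
      have h1 : N y ≤ δ t - δ y := Nat.sInf_le ⟨t, ht, hy, rfl⟩
      have h2 : N x = δ t - δ x := hk
      have := hδ _ _ hyx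
      have := hle _ _ hy
      omega
  choose! f hf using this
  exact ⟨N, f, hf⟩

def Ch (U : V → V → Prop) (A : Set V) (x : V) : Set V := {c | c ∈ A ∧ U c x}

def Good (U : V → V → Prop) (T A : Set V) (x : V) : Prop :=
  (Ch U A x).Infinite ∨ (Even (Ch U A x).ncard ↔ (x ∈ A ↔ x ∈ T))

lemma total {α : Type*} {U : α → α → Prop} (hU : ∀ x y z, U x y → U x z → y = z) {x y z : α}
    (h1 : ReflTransGen U x y) (h2 : ReflTransGen U x z) :
    ReflTransGen U y z ∨ ReflTransGen U z y :=
  ReflTransGen.total_of_right_unique (fun {a b c} h h' => hU a b c h h') h1 h2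

lemma conv (G : SimpleGraph V) (U : V → V → Prop) (δ : V → ℕ)
    (hδ : ∀ y x, U y x → δ x < δ y) (hU : ∀ x y z, U x y → U x z → y = z)
    (hadj : ∀ y x, U y x → G.Adj y x) (T A : Set V)
    (hpar : ∀ a ∈ A, ∃ p, U a p) (hgood : ∀ x, Good U T A x)
    (hreach : ∀ x ∈ A, ∃ t ∈ T, ReflTransGen (fun y x => U y x ∧ y ∈ A) t x) :
    G.HasTJoin T := by
  classical
  obtain ⟨N, f, hf⟩ := rank (fun y x => U y x ∧ y ∈ A) δ (fun y x h => hδ y x h.1) A T hreach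
  choose! par hpar using hpar
  let Fl : V → V → Prop := fun y x => x ∈ A ∧ x ∉ T ∧ y = f x
  have FlU : ∀ y x, Fl y x → U y x ∧ y ∈ A := by
    rintro y x ⟨h1, h2, rfl⟩
    exact (hf x h1 h2).1
  have Flr : ∀ x y z, Fl x y → Fl x z → y = z := fun x y z h h' =>
    hU x y z (FlU _ _ h).1 (FlU _ _ h').1
  have Fll : ∀ x y z, Fl y x → Fl z x → y = z := by
    rintro x y z ⟨_, _, rfl⟩ ⟨_, _, rfl⟩; rfl
  have hD : ∀ n, ∀ x ∈ A, N x ≤ n → ∃ t ∈ T, t ∈ A ∧ ReflTransGen Fl t x := by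
    intro n
    induction n with
    | zero =>
      intro x hx hn
      by_cases hxT : x ∈ T
      · exact ⟨x, hxT, hx, .refl⟩
      · have := (hf x hx hxT).2; omega
    | succ n ih =>
      intro x hx hn
      by_cases hxT : x ∈ T
      · exact ⟨x, hxT, hx, .refl⟩
      · have h := hf x hx hxT
        obtain ⟨t, h1, h2, h3⟩ := ih (f x) h.1.2 (by omega)
        exact ⟨t, h1, h2, h3.tail ⟨hx, hxT, rfl⟩⟩
  have term : ∀ t ∈ T, ∀ y, ReflTransGen Fl y t → y = t := by
    intro t ht y h
    rcases ReflTransGen.cases_tail h with h | ⟨b, _, hb⟩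
    · exact h.symm
    · exact absurd ht hb.2.1
  have uniqT : ∀ t ∈ T, ∀ t' ∈ T, ∀ y, ReflTransGen Fl t y → ReflTransGen Fl t' y → t = t' := by
    intro t ht t' ht' y h h'
    have h1 := reflTransGen_swap.mpr h
    have h2 := reflTransGen_swap.mpr h'
    rcases total (U := Function.swap Fl) (fun x y z => Fll x y z) h1 h2 with h3 | h3
    · exact (term t ht _ (reflTransGen_swap.mp h3)).symm
    · exact (term t' ht' _ (reflTransGen_swap.mp h3))
  let H : Set V := {x | x ∈ A ∧ ∀ p, ¬ Fl x p}
  have hH : ∀ n, ∀ y ∈ A, δ y ≤ n → ∃ x ∈ H, ReflTransGen Fl y x := by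
    intro n
    induction n with
    | zero =>
      intro y hy hn
      refine ⟨y, ⟨hy, fun p hp => ?_⟩, .refl⟩
      have := hδ _ _ (FlU _ _ hp).1
      omega
    | succ n ih =>
      intro y hy hn
      by_cases h : ∃ p, Fl y p
      · obtain ⟨p, hp⟩ := h
        have := hδ _ _ (FlU _ _ hp).1
        obtain ⟨x, h1, h2⟩ := ih p hp.1 (by omega)
        exact ⟨x, h1, h2.head hp⟩
      · push Not at h
        exact ⟨y, ⟨hy, h⟩, .refl⟩
  have hH' : ∀ y ∈ A, ∃ x ∈ H, ReflTransGen Fl y x := fun y hy => hH _ y hy le_rfl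
  choose! hd hdH hdF using hH'
  have uniqH : ∀ y, ∀ x ∈ H, ∀ x' ∈ H, ReflTransGen Fl y x → ReflTransGen Fl y x' → x = x' := by
    intro y x hx x' hx' h h'
    rcases total Flr h h' with h3 | h3
    · rcases ReflTransGen.cases_head h3 with h | ⟨b, hb, _⟩
      · exact h
      · exact absurd hb (hx.2 b)
    · rcases ReflTransGen.cases_head h3 with h | ⟨b, hb, _⟩
      · exact h.symm
      · exact absurd hb (hx'.2 b)
  let l : V → V := fun t => if t ∈ A then par (hd t) else t
  let E : V → Set (Sym2 V) := fun t => {e | ∃ y p, U y p ∧ y ∈ A ∧ ReflTransGen Fl t y ∧ e = s(y, p)}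
  refine gather G T l E ?_ ?_ ?_
  · rintro t ht t' ht' e ⟨y, p, h1, h2, h3, rfl⟩ ⟨y', p', h1', h2', h3', h4⟩
    have hd1 := hδ _ _ h1
    have hd2 := hδ _ _ h1'
    rw [Sym2.eq_iff] at h4
    rcases h4 with ⟨rfl, rfl⟩ | ⟨rfl, rfl⟩
    · exact uniqT t ht t' ht' y h3 h3'
    · omega
  · intro t ht
    by_cases htA : t ∈ A
    · have hwalk : ∀ x, ReflTransGen Fl t x → ∃ w : G.Walk t x, ∀ e ∈ w.edges, e ∈ E t := by
        intro x hx
        induction hx with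
        | refl => exact ⟨.nil, by simp⟩
        | tail h1 h2 ih =>
          obtain ⟨w, hw⟩ := ih
          have h3 := FlU _ _ h2
          refine ⟨w.concat (hadj _ _ h3.1), ?_⟩
          intro e he
          rw [SimpleGraph.Walk.edges_concat] at he
          simp only [List.concat_eq_append, List.mem_append, List.mem_singleton] at he
          rcases he with he | he
          · exact hw e he
          · exact ⟨_, _, h3.1, h3.2, h1, he⟩
      obtain ⟨w, hw⟩ := hwalk _ (hdF t htA)
      have hp := hpar _ (hdH t htA).1
      have hl : l t = par (hd t) := by simp [l, htA]
      rw [hl]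
      refine ⟨w.concat (hadj _ _ hp), ?_⟩
      intro e he
      rw [SimpleGraph.Walk.edges_concat] at he
      simp only [List.concat_eq_append, List.mem_append, List.mem_singleton] at he
      rcases he with he | he
      · exact hw e he
      · exact ⟨_, _, hp, (hdH t htA).1, hdF t htA, he⟩
    · have hl : l t = t := by simp [l, htA]
      rw [hl]
      exact ⟨.nil, by simp⟩
  · intro v
    -- the part of the fibre coming from active vertices
    let Φ : Set V := {t | t ∈ T ∧ t ∈ A ∧ par (hd t) = v}
    have himg : hd '' Φ = H ∩ Ch U A v := by
      ext x
      constructor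
      · rintro ⟨t, ⟨h1, h2, h3⟩, rfl⟩
        refine ⟨hdH t h2, (hdH t h2).1, ?_⟩
        rw [← h3]; exact hpar _ (hdH t h2).1
      · rintro ⟨hx, hxA, hxv⟩
        obtain ⟨t, h1, h2, h3⟩ := hD _ x hxA le_rfl
        have : hd t = x := uniqH t _ (hdH t h2) _ hx (hdF t h2) h3
        refine ⟨t, ⟨h1, h2, ?_⟩, this⟩
        rw [this]; exact hU _ _ _ (hpar x hxA) hxv
    have hinj : Set.InjOn hd Φ := by
      rintro t ⟨h1, h2, h3⟩ t' ⟨h1', h2', h3'⟩ h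
      exact uniqT t h1 t' h1' (hd t) (hdF t h2) (h ▸ hdF t' h2')
    have hcard : Φ.ncard = (H ∩ Ch U A v).ncard := by
      rw [← himg, Set.InjOn.ncard_image hinj]
    have hfinΦ : Φ.Finite ↔ (H ∩ Ch U A v).Finite := by
      rw [← himg, Set.finite_image_iff hinj]
    have hg := hgood v
    unfold Good at hg
    by_cases hvA : v ∈ A
    · have hfib : {t | t ∈ T ∧ l t = v} = Φ := by
        ext t
        simp only [Set.mem_ofPred_eq, Φ, l]
        by_cases htA : t ∈ A
        · simp [htA]
        · simp only [htA, if_false, false_and, and_false, iff_false]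
          rintro ⟨_, rfl⟩; exact htA hvA
      rw [hfib, hcard]
      by_cases hvT : v ∈ T
      · have : H ∩ Ch U A v = Ch U A v := by
          rw [Set.inter_eq_right]
          rintro c ⟨hc, hcv⟩
          refine ⟨hc, fun p hp => ?_⟩
          have : p = v := hU _ _ _ (FlU _ _ hp).1 hcv
          subst this; exact hp.2.1 hvT
        rw [this]
        rcases hg with hg | hg
        · simp [hg.ncard]
        · exact hg.mpr (by simp [hvA, hvT])
      · have hfv := (hf v hvA hvT).1
        have : H ∩ Ch U A v = Ch U A v \ {f v} := by
          ext c
          simp only [Set.mem_inter_iff, Set.mem_sdiff, Set.mem_singleton_iff]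
          constructor
          · rintro ⟨h1, h2⟩
            exact ⟨h2, fun h => h1.2 v ⟨hvA, hvT, h⟩⟩
          · rintro ⟨h1, h2⟩
            refine ⟨⟨h1.1, fun p hp => ?_⟩, h1⟩
            have : p = v := hU _ _ _ (FlU _ _ hp).1 h1.2
            subst this; exact h2 hp.2.2
        rw [this]
        have hm : f v ∈ Ch U A v := ⟨hfv.2, hfv.1⟩
        by_cases hfi : (Ch U A v).Finite
        · have h1 := Set.ncard_sdiff_singleton_add_one hm hfi
          have h2 : ¬ Even (Ch U A v).ncard := by
            rcases hg with hg | hg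
            · exact absurd hfi hg
            · rw [hg]; simp [hvA, hvT]
          rw [← h1, Nat.even_add_one, not_not] at h2
          exact h2
        · have : (Ch U A v \ {f v}).Infinite := Set.Infinite.sdiff hfi (Set.finite_singleton _)
          simp [this.ncard]
    · have hHC : H ∩ Ch U A v = Ch U A v := by
        rw [Set.inter_eq_right]
        rintro c ⟨hc, hcv⟩
        refine ⟨hc, fun p hp => ?_⟩
        have : p = v := hU _ _ _ (FlU _ _ hp).1 hcv
        subst this; exact hvA hp.1
      rw [hHC] at hcard hfinΦ
      by_cases hvT : v ∈ T
      · have hfib : {t | t ∈ T ∧ l t = v} = insert v Φ := by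
          ext t
          simp only [Set.mem_ofPred_eq, Φ, l, Set.mem_insert_iff]
          by_cases htA : t ∈ A
          · simp only [htA, if_true, true_and]
            constructor
            · exact Or.inr
            · rintro (rfl | h)
              · exact absurd htA hvA
              · exact h
          · simp only [htA, if_false, false_and, and_false, or_false]
            constructor
            · exact And.right
            · rintro rfl; exact ⟨hvT, rfl⟩
        rw [hfib]
        have hvΦ : v ∉ Φ := fun h => hvA h.2.1
        by_cases hfi : Φ.Finite
        · rw [Set.ncard_insert_of_notMem hvΦ hfi, hcard, Nat.even_add_one]
          rcases hg with hg | hg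
          · exact absurd (hfinΦ.mp hfi) hg
          · rw [hg]; simp [hvA, hvT]
        · have : (insert v Φ).Infinite := fun h => hfi (h.subset (Set.subset_insert _ _))
          simp [this.ncard]
      · have hfib : {t | t ∈ T ∧ l t = v} = Φ := by
          ext t
          simp only [Set.mem_ofPred_eq, Φ, l]
          by_cases htA : t ∈ A
          · simp [htA]
          · simp only [htA, if_false, false_and, and_false, iff_false]
            rintro ⟨h, rfl⟩; exact hvT h
        rw [hfib, hcard]
        rcases hg with hg | hg
        · simp [hg.ncard]
        · exact hg.mpr (by simp [hvA, hvT])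

def Sol (U : V → V → Prop) (T : Set V) (v : V) (A : Set V) : Prop :=
  (∀ x ∈ A, ReflTransGen U x v) ∧ (∀ x, ReflTransGen U x v → Good U T A x) ∧
  (∀ x ∈ A, ∃ t ∈ T, ReflTransGen (fun y x => U y x ∧ y ∈ A) t x)

def JJ (U : V → V → Prop) (T : Set V) (v : V) : Prop := ∃ A, Sol U T v A ∧ v ∉ A

def SS (U : V → V → Prop) (T : Set V) : Set V := {x | ∀ z, ReflTransGen U x z → ¬ JJ U T z}

def WW (U : V → V → Prop) (T : Set V) : Set V :=
  {x | x ∈ SS U T ∧ (Ch U (SS U T) x).Finite ∧ ¬ (Even (Ch U (SS U T) x).ncard ↔ x ∈ T)}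

lemma SS_up {U : V → V → Prop} {T : Set V} {x y : V} (hx : x ∈ SS U T)
    (h : ReflTransGen U x y) : y ∈ SS U T := fun z hz => hx z (h.trans hz)

lemma SS_rtg {U : V → V → Prop} {T : Set V} {x y : V} (hx : x ∈ SS U T)
    (h : ReflTransGen U x y) : ReflTransGen (fun y x => U y x ∧ y ∈ SS U T) x y := by
  induction h with
  | refl => exact .refl
  | tail h1 h2 ih => exact ih.tail ⟨h2, SS_up hx h1⟩

lemma Good_congr {U : V → V → Prop} {T A B : Set V} {x : V} (h1 : x ∈ A ↔ x ∈ B)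
    (h2 : ∀ c, U c x → (c ∈ A ↔ c ∈ B)) (h : Good U T B x) : Good U T A x := by
  have : Ch U A x = Ch U B x := by
    ext c
    constructor
    · rintro ⟨a, b⟩; exact ⟨(h2 c b).mp a, b⟩
    · rintro ⟨a, b⟩; exact ⟨(h2 c b).mpr a, b⟩
  unfold Good at *
  rw [this, h1]; exact h

lemma ext_sol (U : V → V → Prop) (hU : ∀ x y z, U x y → U x z → y = z) (T : Set V) (v : V)
    (hv : v ∈ SS U T) (A' : Set V) (hA' : A' ⊆ SS U T) (hAv : ∀ x ∈ A', ReflTransGen U x v)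
    (hg : ∀ x ∈ SS U T, ReflTransGen U x v → Good U T A' x)
    (hr : ∀ x ∈ A', ∃ t ∈ T, ReflTransGen (fun y x => U y x ∧ y ∈ A') t x) :
    ∃ A, Sol U T v A ∧ (v ∈ A ↔ v ∈ A') := by
  classical
  have h0 : ∀ z, JJ U T z → ∃ A, Sol U T z A ∧ z ∉ A := fun z h => h
  choose! Az hAz hAz' using h0
  let top : V → Prop := fun z => JJ U T z ∧ ∃ p, U z p ∧ p ∈ SS U T
  let A : Set V := {x | x ∈ A' ∨ ∃ z, top z ∧ ReflTransGen U z v ∧ x ∈ Az z}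
  have f1 : ∀ x, ReflTransGen U x v → x ∉ SS U T →
      ∃ z, top z ∧ ReflTransGen U z v ∧ ReflTransGen U x z := by
    intro x hx
    induction hx using ReflTransGen.head_induction_on with
    | refl => exact fun h => absurd hv h
    | head h1 h2 ih =>
      rename_i x b
      intro hxS
      by_cases hb : b ∈ SS U T
      · refine ⟨x, ⟨?_, b, h1, hb⟩, h2.head h1, .refl⟩
        by_contra hJ
        apply hxS
        intro z hz
        rcases ReflTransGen.cases_head hz with rfl | ⟨b', hb', hz'⟩
        · exact hJ
        · obtain rfl := hU _ _ _ h1 hb'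
          exact hb z hz'
      · obtain ⟨z, a, b, c⟩ := ih hb
        exact ⟨z, a, b, c.head h1⟩
  have f2 : ∀ x z, JJ U T z → ReflTransGen U x z → x ∉ SS U T := fun x z hz h hx => hx z h hz
  have f3' : ∀ z z', top z → top z' → ReflTransGen U z z' → z = z' := by
    rintro z z' ⟨_, p, hp, hpS⟩ ⟨hz', _⟩ h
    rcases ReflTransGen.cases_head h with h | ⟨b, hb, hz⟩
    · exact h
    · obtain rfl := hU _ _ _ hp hb
      exact absurd hz' (hpS _ hz)
  have f3 : ∀ x z z', top z → top z' → ReflTransGen U x z → ReflTransGen U x z' → z = z' := by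
    intro x z z' h h' hx hx'
    rcases total hU hx hx' with h3 | h3
    · exact f3' _ _ h h' h3
    · exact (f3' _ _ h' h h3).symm
  have m1 : ∀ x ∈ SS U T, (x ∈ A ↔ x ∈ A') := by
    intro x hx
    constructor
    · rintro (h | ⟨z, hz, _, hxz⟩)
      · exact h
      · exact absurd hx (f2 x z hz.1 ((hAz z hz.1).1 x hxz))
    · exact Or.inl
  have m2 : ∀ x z, top z → ReflTransGen U z v → ReflTransGen U x z → (x ∈ A ↔ x ∈ Az z) := by
    intro x z hz hzv hxz
    constructor
    · rintro (h | ⟨z', hz', _, hxz'⟩)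
      · exact absurd (hA' h) (f2 x z hz.1 hxz)
      · obtain rfl := f3 x z z' hz hz' hxz ((hAz z' hz'.1).1 x hxz')
        exact hxz'
    · exact fun h => Or.inr ⟨z, hz, hzv, h⟩
  refine ⟨A, ⟨?_, ?_, ?_⟩, m1 v hv⟩
  · rintro x (h | ⟨z, hz, hzv, hxz⟩)
    · exact hAv x h
    · exact ((hAz z hz.1).1 x hxz).trans hzv
  · intro x hx
    by_cases hxS : x ∈ SS U T
    · refine Good_congr (m1 x hxS) ?_ (hg x hxS hx)
      intro c hc
      constructor
      · rintro (h | ⟨z, hz, hzv, hxz⟩)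
        · exact h
        · exfalso
          rcases ReflTransGen.cases_head ((hAz z hz.1).1 c hxz) with rfl | ⟨b, hb, hbz⟩
          · exact hAz' _ hz.1 hxz
          · obtain rfl := hU _ _ _ hc hb
            exact hxS z hbz hz.1
      · exact Or.inl
    · obtain ⟨z, hz, hzv, hxz⟩ := f1 x hx hxS
      refine Good_congr (m2 x z hz hzv hxz) ?_ ((hAz z hz.1).2.1 x hxz)
      intro c hc
      exact m2 c z hz hzv (hxz.head hc)
  · rintro x (h | ⟨z, hz, hzv, hxz⟩)
    · obtain ⟨t, ht, h⟩ := hr x h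
      exact ⟨t, ht, ReflTransGen.mono (fun a b hab => ⟨hab.1, Or.inl hab.2⟩) _ _ h⟩
    · obtain ⟨t, ht, h⟩ := (hAz z hz.1).2.2 x hxz
      exact ⟨t, ht, ReflTransGen.mono (fun a b hab => ⟨hab.1, Or.inr ⟨z, hz, hzv, hab.2⟩⟩) _ _ h⟩

lemma SS_nonempty (U : V → V → Prop) (hU : ∀ x y z, U x y → U x z → y = z) (T : Set V) (v : V)
    (hv : v ∈ SS U T) :
    ∃ t ∈ T ∩ SS U T, ReflTransGen (fun y x => U y x ∧ y ∈ SS U T) t v := by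
  by_contra hcon
  push Not at hcon
  obtain ⟨A, hA, hvA⟩ := ext_sol U hU T v hv ∅ (Set.empty_subset _) (by simp) (by
    intro x hx hxv
    right
    have : Ch U ∅ x = ∅ := by ext c; simp [Ch]
    rw [this]
    have : x ∉ T := fun hxT => hcon x ⟨hxT, hx⟩ (SS_rtg hx hxv)
    simp [this]) (by simp)
  exact hv v .refl ⟨A, hA, by simp [hvA]⟩

lemma exists_dem (U : V → V → Prop) (δ : V → ℕ) (hδ : ∀ y x, U y x → δ x < δ y)
    (hU : ∀ x y z, U x y → U x z → y = z) (F : V → V → Prop → Prop) (v0 : V) (d0 : Prop) :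
    ∃ dem : V → Prop, (dem v0 ↔ d0) ∧ ∀ x p, U x p → x ≠ v0 → (dem x ↔ F x p (dem p)) := by
  let wf : WellFounded (fun a b : V => δ a < δ b) := (measure δ).wf
  let step : (x : V) → ((y : V) → δ y < δ x → Prop) → Prop := fun x rec =>
    (x = v0 ∧ d0) ∨ (x ≠ v0 ∧ ∃ p, ∃ h : U x p, F x p (rec p (hδ x p h)))
  have key : ∀ x, wf.fix step x = step x (fun y _ => wf.fix step y) := fun x => wf.fix_eq step x
  refine ⟨wf.fix step, ?_, ?_⟩
  · rw [key]; simp [step]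
  · intro x p hp hx
    rw [key]
    constructor
    · rintro (⟨h, _⟩ | ⟨_, p', hp', h⟩)
      · exact absurd h hx
      · obtain rfl := hU _ _ _ hp hp'
        exact h
    · intro h
      exact Or.inr ⟨hx, p, hp, h⟩

lemma run (U : V → V → Prop) (δ : V → ℕ) (hδ : ∀ y x, U y x → δ x < δ y)
    (hU : ∀ x y z, U x y → U x z → y = z) (T : Set V) (v0 : V) (hv0 : v0 ∈ SS U T) (d0 : Prop)
    (hyp : ∀ w ∈ WW U T, TransGen U w v0 → ∃ w' ∈ WW U T, TransGen U w' w)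
    (I0 : (d0 ↔ v0 ∈ WW U T) → ∃ w ∈ WW U T, TransGen U w v0) :
    ∃ A, Sol U T v0 A ∧ (v0 ∈ A ↔ d0) := by
  classical
  obtain ⟨N, q, hq⟩ := rank (fun y x => U y x ∧ y ∈ SS U T) δ (fun y x h => hδ y x h.1)
    (SS U T) (T ∩ SS U T) (fun x hx => SS_nonempty U hU T x hx)
  have hq' : ∀ x ∈ SS U T, x ∉ T → U (q x) x ∧ q x ∈ SS U T ∧ N (q x) < N x := by
    intro x hx hxT
    have := hq x hx (fun h => hxT h.1)
    exact ⟨this.1.1, this.1.2, this.2⟩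
  have htog : ∀ p, (∃ w ∈ WW U T, TransGen U w p) → ∃ c, c ∈ SS U T ∧ U c p ∧
      (∃ w ∈ WW U T, ReflTransGen U w c) ∧
      (c ≠ q p ∨ ∀ c' ∈ SS U T, U c' p → c' ≠ c → ∀ w ∈ WW U T, ¬ ReflTransGen U w c') := by
    rintro p ⟨w, hw, hwp⟩
    obtain ⟨c, hwc, hcp⟩ := TransGen.tail'_iff.mp hwp
    by_cases hex : ∃ c, c ∈ SS U T ∧ U c p ∧ (∃ w ∈ WW U T, ReflTransGen U w c) ∧ c ≠ q p
    · obtain ⟨c, h1, h2, h3, h4⟩ := hex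
      exact ⟨c, h1, h2, h3, Or.inl h4⟩
    · refine ⟨c, SS_up hw.1 hwc, hcp, ⟨w, hw, hwc⟩, Or.inr ?_⟩
      intro c' hc' hcp2 hne w' hw' hwc2
      push Not at hex
      have e1 := hex c (SS_up hw.1 hwc) hcp ⟨w, hw, hwc⟩
      have e2 := hex c' hc' hcp2 ⟨w', hw', hwc2⟩
      exact hne (e2.trans e1.symm)
  choose! tog tS tU tW tq using htog
  obtain ⟨dem, dem0, hdem⟩ := exists_dem U δ hδ hU
    (fun x p d => ¬ (d ↔ p ∈ WW U T) ∨ x ≠ tog p) v0 d0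
  have hlt : ∀ x y, ReflTransGen U x y → δ y ≤ δ x := by
    intro y x h
    induction h with
    | refl => exact le_rfl
    | tail _ h ih => exact (hδ _ _ h).le.trans ih
  have hne0 : ∀ c x, U c x → ReflTransGen U x v0 → c ≠ v0 := by
    rintro c x h h' rfl
    have := hδ _ _ h
    have := hlt _ _ h'
    omega
  have inv : ∀ x, ReflTransGen U x v0 → x ∈ SS U T → (dem x ↔ x ∈ WW U T) →
      ∃ w ∈ WW U T, TransGen U w x := by
    intro x hx
    induction hx using ReflTransGen.head_induction_on with
    | refl => intro _ h; exact I0 (dem0.symm.trans h)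
    | head h1 h2 ih =>
      rename_i x p
      intro hxS hw
      by_cases hxW : x ∈ WW U T
      · exact hyp x hxW (TransGen.head' h1 h2)
      · have hnd : ¬ dem x := fun h => hxW (hw.mp h)
        rw [hdem x p h1 (hne0 x p h1 h2)] at hnd
        push Not at hnd
        obtain ⟨hwr, rfl⟩ := hnd
        obtain ⟨w, hw1, hw2⟩ := tW p (ih (SS_up hxS (.single h1)) hwr)
        refine ⟨w, hw1, ?_⟩
        rcases reflTransGen_iff_eq_or_transGen.mp hw2 with h | h
        · rw [h] at hxW; exact absurd hw1 hxW
        · exact h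
  let A : Set V := {x | x ∈ SS U T ∧ ReflTransGen U x v0 ∧ dem x}
  have hmem : ∀ c x, U c x → ReflTransGen U x v0 → c ∈ SS U T →
      (¬ (dem x ↔ x ∈ WW U T) ∨ c ≠ tog x) → c ∈ A := by
    intro c x hc hx hcS h
    exact ⟨hcS, hx.head hc, (hdem c x hc (hne0 c x hc hx)).mpr h⟩
  have key : ∃ B, Sol U T v0 B ∧ (v0 ∈ B ↔ v0 ∈ A) := by
    refine ext_sol U hU T v0 hv0 A (fun x hx => hx.1) (fun x hx => hx.2.1) ?_ ?_
    · intro x hxS hx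
      have hxA : x ∈ A ↔ dem x := ⟨fun h => h.2.2, fun h => ⟨hxS, hx, h⟩⟩
      unfold Good
      rw [hxA]
      by_cases hok : dem x ↔ x ∈ WW U T
      · have hi := inv x hx hxS hok
        have hC : Ch U A x = Ch U (SS U T) x \ {tog x} := by
          ext c
          simp only [Set.mem_sdiff, Set.mem_singleton_iff]
          constructor
          · rintro ⟨⟨h1, h2, h3⟩, hc⟩
            refine ⟨⟨h1, hc⟩, ?_⟩
            rw [hdem c x hc (hne0 c x hc hx)] at h3
            rcases h3 with h3 | h3
            · exact absurd hok h3
            · exact h3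
          · rintro ⟨⟨h1, h2⟩, h3⟩
            exact ⟨hmem c x h2 hx h1 (Or.inr h3), h2⟩
        rw [hC]
        have hm : tog x ∈ Ch U (SS U T) x := ⟨tS x hi, tU x hi⟩
        by_cases hf : (Ch U (SS U T) x).Finite
        · right
          have h1 := Set.ncard_sdiff_singleton_add_one hm hf
          have h2 : x ∈ WW U T ↔ ¬ (Even (Ch U (SS U T) x).ncard ↔ x ∈ T) :=
            ⟨fun h => h.2.2, fun h => ⟨hxS, hf, h⟩⟩
          rw [← h1, Nat.even_add_one] at h2
          tauto
        · exact Or.inl (Set.Infinite.sdiff hf (Set.finite_singleton _))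
      · have hC : Ch U A x = Ch U (SS U T) x := by
          ext c
          constructor
          · rintro ⟨⟨h1, h2, h3⟩, hc⟩
            exact ⟨h1, hc⟩
          · rintro ⟨h1, h2⟩
            exact ⟨hmem c x h2 hx h1 (Or.inl hok), h2⟩
        rw [hC]
        by_cases hf : (Ch U (SS U T) x).Finite
        · right
          have h2 : x ∈ WW U T ↔ ¬ (Even (Ch U (SS U T) x).ncard ↔ x ∈ T) :=
            ⟨fun h => h.2.2, fun h => ⟨hxS, hf, h⟩⟩
          tauto
        · exact Or.inl hf
    · -- reaching T in a W-free subtree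
      have sub : ∀ n, ∀ x ∈ A, N x < n → (∀ w ∈ WW U T, ¬ ReflTransGen U w x) →
          ∃ t ∈ T, ReflTransGen (fun y x => U y x ∧ y ∈ A) t x := by
        intro n
        induction n with
        | zero => intro x _ h; omega
        | succ n ih =>
          intro x hx hn hW
          by_cases hxT : x ∈ T
          · exact ⟨x, hxT, .refl⟩
          · obtain ⟨h1, h2, h3⟩ := hq' x hx.1 hxT
            have hqA : q x ∈ A := by
              refine hmem _ x h1 hx.2.1 h2 (Or.inl ?_)
              intro h
              exact hW x (h.mp hx.2.2) .refl
            obtain ⟨t, ht, htr⟩ := ih (q x) hqA (by omega)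
              (fun w hw h => hW w hw (h.tail h1))
            exact ⟨t, ht, htr.tail ⟨h1, hqA⟩⟩
      have main : ∀ n, ∀ x ∈ A, N x < n →
          ∃ t ∈ T, ReflTransGen (fun y x => U y x ∧ y ∈ A) t x := by
        intro n
        induction n with
        | zero => intro x _ h; omega
        | succ n ih =>
          intro x hx hn
          by_cases hxT : x ∈ T
          · exact ⟨x, hxT, .refl⟩
          · obtain ⟨h1, h2, h3⟩ := hq' x hx.1 hxT
            by_cases hqA : q x ∈ A
            · obtain ⟨t, ht, htr⟩ := ih (q x) hqA (by omega)
              exact ⟨t, ht, htr.tail ⟨h1, hqA⟩⟩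
            · have hno : ¬ (¬ (dem x ↔ x ∈ WW U T) ∨ q x ≠ tog x) :=
                fun h => hqA (hmem _ x h1 hx.2.1 h2 h)
              push Not at hno
              obtain ⟨hwr, hqt⟩ := hno
              have hi := inv x hx.2.1 hx.1 hwr
              have hxW := hwr.mp hx.2.2
              have hall := (tq x hi).resolve_left (fun h => h hqt.symm)
              have hev : Even (Ch U (SS U T) x).ncard := by
                have := hxW.2.2
                tauto
              have hqm : q x ∈ Ch U (SS U T) x := ⟨h2, h1⟩
              have : ∃ c ∈ Ch U (SS U T) x, c ≠ q x := by
                by_contra hcon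
                push Not at hcon
                have : Ch U (SS U T) x = {q x} := by
                  ext c
                  exact ⟨fun h => hcon c h, fun h => by rw [Set.mem_singleton_iff.mp h]; exact hqm⟩
                rw [this, Set.ncard_singleton] at hev
                exact absurd hev (by decide)
              obtain ⟨c, ⟨hcS, hcx⟩, hcq⟩ := this
              have hcA : c ∈ A := hmem c x hcx hx.2.1 hcS (Or.inr (hqt ▸ hcq))
              obtain ⟨t, ht, htr⟩ := sub _ c hcA (Nat.lt_succ_self _)
                (hall c hcS hcx (hqt ▸ hcq))
              exact ⟨t, ht, htr.tail ⟨hcx, hcA⟩⟩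
      exact fun x hx => main _ x hx (Nat.lt_succ_self _)
  obtain ⟨B, hB, hv⟩ := key
  refine ⟨B, hB, hv.trans ?_⟩
  rw [← dem0]
  exact ⟨fun h => h.2.2, fun h => ⟨hv0, .refl, h⟩⟩

lemma sol_join (G : SimpleGraph V) (U : V → V → Prop) (δ : V → ℕ)
    (hδ : ∀ y x, U y x → δ x < δ y) (hU : ∀ x y z, U x y → U x z → y = z)
    (hadj : ∀ y x, U y x → G.Adj y x) (T A : Set V) (r : V)
    (hT : ∀ t ∈ T, ReflTransGen U t r) (hA : Sol U T r A) (hrA : r ∉ A) : G.HasTJoin T := by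
  have hp : ∀ a ∈ A, ∃ p, U a p ∧ ReflTransGen U p r := by
    intro a ha
    rcases ReflTransGen.cases_head (hA.1 a ha) with rfl | h
    · exact absurd ha hrA
    · exact h
  refine conv G U δ hδ hU hadj T A (fun a ha => ?_) (fun x => ?_) hA.2.2
  · obtain ⟨p, h, _⟩ := hp a ha
    exact ⟨p, h⟩
  · by_cases hx : ReflTransGen U x r
    · exact hA.2.1 x hx
    · right
      have : Ch U A x = ∅ := by
        ext c
        simp only [Ch, Set.mem_ofPred_eq, Set.mem_empty_iff_false, iff_false]
        rintro ⟨h1, h2⟩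
        obtain ⟨p, h3, h4⟩ := hp c h1
        obtain rfl := hU _ _ _ h2 h3
        exact hx h4
      have h1 : x ∉ A := fun h => hx (hA.1 x h)
      have h2 : x ∉ T := fun h => hx (hT x h)
      simp [this, h1, h2]

lemma tree (G : SimpleGraph V) (U : V → V → Prop) (δ : V → ℕ)
    (hδ : ∀ y x, U y x → δ x < δ y) (hU : ∀ x y z, U x y → U x z → y = z)
    (hadj : ∀ y x, U y x → G.Adj y x) (T : Set V) (r : V) (hr : ∀ p, ¬ U r p)
    (hT : ∀ t ∈ T, ReflTransGen U t r) : G.HasTJoin T ∨ G.HasTJoin (symmDiff T {r}) := by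
  classical
  by_cases hJ : JJ U T r
  · obtain ⟨A, hA, hrA⟩ := hJ
    exact Or.inl (sol_join G U δ hδ hU hadj T A r hT hA hrA)
  have hrS : r ∈ SS U T := by
    intro z hz
    rcases ReflTransGen.cases_head hz with rfl | ⟨p, h, _⟩
    · exact hJ
    · exact absurd h (hr p)
  have hstep : ∀ w ∈ WW U T, ∃ w' ∈ WW U T, TransGen U w' w := by
    intro w hw
    by_contra hcon
    push Not at hcon
    obtain ⟨A, hA, hd⟩ := run U δ hδ hU T w hw.1 False
      (fun w' hw' h => absurd h (hcon w' hw')) (fun h => (h.mpr hw).elim)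
    exact hw.1 w .refl ⟨A, hA, fun h => hd.mp h⟩
  by_cases hW : ∃ w ∈ WW U T, ReflTransGen U w r
  · obtain ⟨w, hw, hwr⟩ := hW
    obtain ⟨w', hw', hww2⟩ := hstep w hw
    obtain ⟨A, hA, hd⟩ := run U δ hδ hU T r hrS False (fun w hw _ => hstep w hw)
      (fun _ => ⟨w', hw', hww2.trans_left hwr⟩)
    exact absurd ⟨A, hA, fun h => hd.mp h⟩ hJ
  · push Not at hW
    obtain ⟨A, hA, hd⟩ := run U δ hδ hU T r hrS True (fun w hw _ => hstep w hw)
      (fun h => absurd .refl (hW r (h.mp trivial)))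
    have hrA : r ∈ A := hd.mpr trivial
    right
    have hlt : ∀ x y, ReflTransGen U x y → δ y ≤ δ x := by
      intro y x h
      induction h with
      | refl => exact le_rfl
      | tail _ h ih => exact (hδ _ _ h).le.trans ih
    have hmT : ∀ x, x ≠ r → (x ∈ symmDiff T {r} ↔ x ∈ T) := by
      intro x hx
      simp [Set.mem_symmDiff, hx]
    have hrm : r ∈ symmDiff T {r} ↔ r ∉ T := by
      simp [Set.mem_symmDiff]
    refine sol_join G U δ hδ hU hadj _ (A \ {r}) r ?_ ⟨?_, ?_, ?_⟩ (by simp)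
    · intro t ht
      by_cases h : t = r
      · subst h; exact .refl
      · exact hT t ((hmT t h).mp ht)
    · exact fun x hx => hA.1 x hx.1
    · intro x hx
      have hC : Ch U (A \ {r}) x = Ch U A x := by
        ext c
        constructor
        · rintro ⟨⟨h1, _⟩, h2⟩; exact ⟨h1, h2⟩
        · rintro ⟨h1, h2⟩
          exact ⟨⟨h1, fun h => hr x (by rw [← Set.mem_singleton_iff.mp h]; exact h2)⟩, h2⟩
      have hg := hA.2.1 x hx
      unfold Good at hg ⊢
      rw [hC]
      refine hg.imp_right fun hg => hg.trans ?_
      by_cases h : x = r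
      · subst h
        rw [hrm]
        simp [hrA]
      · rw [hmT x h]
        simp [h]
    · rintro x ⟨hx, hxr⟩
      obtain ⟨t, ht, h⟩ := hA.2.2 x hx
      have hxr' : x ≠ r := hxr
      have h' : t ≠ r ∧ ReflTransGen (fun y x => U y x ∧ y ∈ A \ {r}) t x := by
        clear ht
        induction h using ReflTransGen.head_induction_on with
        | refl => exact ⟨hxr', .refl⟩
        | head h1 h2 ih =>
          rename_i a b
          have : a ≠ r := by rintro rfl; exact hr _ h1.1
          exact ⟨this, ih.2.head ⟨h1.1, h1.2, this⟩⟩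
      exact ⟨t, (hmT t h'.1).mpr ht, h'.2⟩

lemma reach_join (G : SimpleGraph V) (r : V) (T : Set V) (hT : ∀ t ∈ T, G.Reachable r t) :
    G.HasTJoin T ∨ G.HasTJoin (symmDiff T {r}) := by
  classical
  have hpar : ∀ v, v ≠ r ∧ G.Reachable r v → ∃ p, G.Adj v p ∧ G.Reachable r p ∧
      G.dist r p < G.dist r v := by
    rintro v ⟨hv, hrv⟩
    obtain ⟨w, hw⟩ := hrv.symm.exists_walk_length_eq_dist
    cases w with
    | nil => exact absurd rfl hv
    | cons h w =>
      rename_i p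
      refine ⟨p, h, ⟨w.reverse⟩, ?_⟩
      have h1 := SimpleGraph.dist_le w
      rw [SimpleGraph.Walk.length_cons] at hw
      rw [SimpleGraph.dist_comm (u := r) (v := p), SimpleGraph.dist_comm (u := r) (v := v)]
      omega
  choose! par h1 h2 h3 using hpar
  let U : V → V → Prop := fun y x => (y ≠ r ∧ G.Reachable r y) ∧ x = par y
  refine tree G U (G.dist r) ?_ ?_ ?_ T r ?_ ?_
  · rintro y x ⟨h, rfl⟩; exact h3 y h
  · rintro x y z ⟨_, rfl⟩ ⟨_, rfl⟩; rfl
  · rintro y x ⟨h, rfl⟩; exact h1 y h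
  · rintro p ⟨h, _⟩; exact h.1 rfl
  · have : ∀ n, ∀ v, G.Reachable r v → G.dist r v < n → ReflTransGen U v r := by
      intro n
      induction n with
      | zero => intro v _ h; omega
      | succ n ih =>
        intro v hv hn
        by_cases h : v = r
        · subst h; exact .refl
        · have := h3 v ⟨h, hv⟩
          exact (ih (par v) (h2 v ⟨h, hv⟩) (by omega)).head ⟨⟨h, hv⟩, rfl⟩
    exact fun t ht => this _ t (hT t ht) (Nat.lt_succ_self _)

lemma even_of_invol (s : Set V) (hs : s.Finite) (σ : V → V)
    (h : ∀ t ∈ s, σ t ∈ s ∧ σ t ≠ t ∧ σ (σ t) = t) : Even s.ncard := by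
  classical
  have h1 : ∑ _x ∈ hs.toFinset, (1 : ZMod 2) = 0 := by
    refine Finset.sum_involution (fun t _ => σ t) ?_ ?_ ?_ ?_
    · intro a _; decide
    · intro a ha _; exact (h a (by simpa using ha)).2.1
    · intro a ha; simpa using (h a (by simpa using ha)).1
    · intro a ha; exact (h a (by simpa using ha)).2.2
  rw [Set.ncard_eq_toFinset_card s hs]
  simpa [ZMod.natCast_eq_zero_iff_even] using h1

lemma even_join {G : SimpleGraph V} {T : Set V} {P : Set (Σ u : V, Σ v : V, G.Walk u v)}
    (hP : G.IsTJoin T P) (hT : T.Finite) : Even T.ncard := by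
  classical
  obtain ⟨h1, _, h3⟩ := hP
  have : ∀ t ∈ T, ∃ t' ∈ T, t' ≠ t ∧ ∃ p ∈ P, (p.1 = t ∧ p.2.1 = t') ∨ (p.1 = t' ∧ p.2.1 = t) := by
    intro t ht
    obtain ⟨p, ⟨hp, h⟩, _⟩ := h3 t ht
    obtain ⟨_, hne, ha, hb⟩ := h1 p hp
    rcases h with rfl | rfl
    · exact ⟨_, hb, hne.symm, p, hp, Or.inl ⟨rfl, rfl⟩⟩
    · exact ⟨_, ha, hne, p, hp, Or.inr ⟨rfl, rfl⟩⟩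
  choose! σ hσT hσn hσ using this
  refine even_of_invol T hT σ fun t ht => ⟨hσT t ht, hσn t ht, ?_⟩
  obtain ⟨p, hp, hpt⟩ := hσ t ht
  obtain ⟨p', hp', hpt'⟩ := hσ _ (hσT t ht)
  have e : p = p' := (h3 _ (hσT t ht)).unique ⟨hp, by tauto⟩ ⟨hp', by tauto⟩
  subst e
  have n1 := hσn t ht
  have n2 := hσn _ (hσT t ht)
  rcases hpt with ⟨a, b⟩ | ⟨a, b⟩ <;> rcases hpt' with ⟨c, d⟩ | ⟨c, d⟩
  · exact absurd (c.symm.trans a) n1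
  · exact c.symm.trans a
  · exact d.symm.trans b
  · exact absurd (d.symm.trans b) n1

lemma even_symm (A B : Set V) (hA : A.Finite) (hB : B.Finite) :
    Even (symmDiff A B).ncard ↔ (Even A.ncard ↔ Even B.ncard) := by
  have h1 : (symmDiff A B).ncard = (A \ B).ncard + (B \ A).ncard := by
    have : symmDiff A B = (A \ B) ∪ (B \ A) := rfl
    rw [this]
    exact Set.ncard_union_eq disjoint_sdiff_sdiff (hA.subset Set.sdiff_subset)
      (hB.subset Set.sdiff_subset)
  have h2 := Set.ncard_inter_add_ncard_sdiff_eq_ncard A B hA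
  have h3 := Set.ncard_inter_add_ncard_sdiff_eq_ncard B A hB
  rw [Set.inter_comm] at h3
  rw [h1, ← h2, ← h3, Nat.even_add, Nat.even_add, Nat.even_add]
  tauto

lemma reach_of_walk {G H : SimpleGraph V} {u v : V} (w : G.Walk u v)
    (h : ∀ e ∈ w.edges, e ∈ H.edgeSet) {x : V} (hx : x ∈ w.support) : H.Reachable u x := by
  classical
  exact ⟨(w.takeUntil x hx).transfer H fun e he => h e (w.edges_takeUntil_subset_edges hx he)⟩

lemma modify (G : SimpleGraph V) (hG : G.Connected) (T D : Set V) (hD : D.Finite)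
    (hDe : Even D.ncard) (hT : G.HasTJoin T) : G.HasTJoin (symmDiff T D) := by
  classical
  obtain ⟨P, hP⟩ := hT
  have hP' := hP
  obtain ⟨hP1, hP2, hP3⟩ := hP'
  obtain ⟨r⟩ := hG.nonempty
  have hq : ∀ d, Nonempty (G.Walk r d) := fun d => hG.preconnected r d
  let q : (d : V) → G.Walk r d := fun d => (hq d).some
  let EQ : Set (Sym2 V) := {e | ∃ d ∈ D, e ∈ (q d).edges}
  have hEQ : EQ.Finite := by
    have : EQ = ⋃ d ∈ D, {e | e ∈ (q d).edges} := by ext e; simp [EQ]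
    rw [this]
    exact hD.biUnion fun d _ => List.finite_toSet _
  let P0 : Set (Σ u : V, Σ v : V, G.Walk u v) :=
    {p | p ∈ P ∧ ((∃ e ∈ p.2.2.edges, e ∈ EQ) ∨ p.1 ∈ D ∨ p.2.1 ∈ D)}
  have hP0 : P0.Finite := by
    have hsub : P0 ⊆ (⋃ e ∈ EQ, {p | p ∈ P ∧ e ∈ p.2.2.edges}) ∪
        (⋃ d ∈ D, {p | p ∈ P ∧ (p.1 = d ∨ p.2.1 = d)}) := by
      rintro p ⟨hp, (⟨e, h1, h2⟩ | h | h)⟩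
      · left
        simp only [Set.mem_iUnion]
        exact ⟨e, h2, hp, h1⟩
      · right
        simp only [Set.mem_iUnion]
        exact ⟨_, h, hp, Or.inl rfl⟩
      · right
        simp only [Set.mem_iUnion]
        exact ⟨_, h, hp, Or.inr rfl⟩
    refine Set.Finite.subset (Set.Finite.union ?_ ?_) hsub
    · refine hEQ.biUnion fun e _ => Set.Subsingleton.finite ?_
      rintro p ⟨h1, h2⟩ p' ⟨h1', h2'⟩
      by_contra hne
      exact hP2 p h1 p' h1' hne e h2 h2'
    · refine hD.biUnion fun d _ => Set.Subsingleton.finite ?_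
      rintro p ⟨h1, h2⟩ p' ⟨h1', h2'⟩
      have hdT : d ∈ T := by
        have := hP1 p h1
        rcases h2 with rfl | rfl
        · exact this.2.2.1
        · exact this.2.2.2
      exact (hP3 d hdT).unique ⟨h1, h2⟩ ⟨h1', h2'⟩
  let T1 : Set V := {v | ∃ p ∈ P0, p.1 = v ∨ p.2.1 = v}
  have hT1f : T1.Finite := by
    have : T1 ⊆ (fun p : (Σ u : V, Σ v : V, G.Walk u v) => p.1) '' P0 ∪
        (fun p : (Σ u : V, Σ v : V, G.Walk u v) => p.2.1) '' P0 := by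
      rintro v ⟨p, hp, h | h⟩
      · exact Or.inl ⟨p, hp, h⟩
      · exact Or.inr ⟨p, hp, h⟩
    exact ((hP0.image _).union (hP0.image _)).subset this
  have hT1T : T1 ⊆ T := by
    rintro v ⟨p, hp, h⟩
    have := hP1 p hp.1
    rcases h with rfl | rfl
    · exact this.2.2.1
    · exact this.2.2.2
  have hT1j : G.IsTJoin T1 P0 := by
    refine ⟨?_, ?_, ?_⟩
    · intro p hp
      have := hP1 p hp.1
      exact ⟨this.1, this.2.1, ⟨p, hp, Or.inl rfl⟩, ⟨p, hp, Or.inr rfl⟩⟩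
    · exact fun p hp p' hp' => hP2 p hp.1 p' hp'.1
    · intro t ht
      have ht' := hT1T ht
      obtain ⟨p, hp, h⟩ := ht
      exact ⟨p, ⟨hp, h⟩, fun p' hp' => (hP3 t ht').unique ⟨hp'.1.1, hp'.2⟩ ⟨hp.1, h⟩⟩
  have hT1e := even_join hT1j hT1f
  let EH : Set (Sym2 V) := {e | e ∈ EQ ∨ ∃ p ∈ P0, e ∈ p.2.2.edges}
  have hEHG : EH ⊆ G.edgeSet := by
    rintro e (⟨d, _, h⟩ | ⟨p, _, h⟩)
    · exact SimpleGraph.Walk.edges_subset_edgeSet _ h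
    · exact SimpleGraph.Walk.edges_subset_edgeSet _ h
  let H : SimpleGraph V := SimpleGraph.fromEdgeSet EH
  have hHe : H.edgeSet = EH := by
    simp only [H, SimpleGraph.edgeSet_fromEdgeSet]
    ext e
    simp only [Set.mem_sdiff]
    exact ⟨fun h => h.1, fun h => ⟨h, fun h' => G.not_isDiag_of_mem_edgeSet (hEHG h) h'⟩⟩
  have hHG : H ≤ G := by
    rw [← SimpleGraph.edgeSet_subset_edgeSet, hHe]; exact hEHG
  have hqH : ∀ d ∈ D, ∀ e ∈ (q d).edges, e ∈ H.edgeSet := by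
    intro d hd e he
    rw [hHe]; exact Or.inl ⟨d, hd, he⟩
  have hpH : ∀ p ∈ P0, ∀ e ∈ p.2.2.edges, e ∈ H.edgeSet := by
    intro p hp e he
    rw [hHe]; exact Or.inr ⟨p, hp, he⟩
  have hrD : ∀ d ∈ D, H.Reachable r d := fun d hd =>
    reach_of_walk (q d) (hqH d hd) (SimpleGraph.Walk.end_mem_support _)
  have hrT1 : ∀ v ∈ T1, H.Reachable r v := by
    rintro v ⟨p, hp, hv⟩
    have hends : H.Reachable p.1 p.2.1 :=
      reach_of_walk p.2.2 (hpH p hp) (SimpleGraph.Walk.end_mem_support _)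
    have hr1 : H.Reachable r p.1 := by
      rcases hp.2 with ⟨e, h1, d, hd, h2⟩ | h | h
      · induction e using Sym2.ind with
        | _ a b =>
          have ha := SimpleGraph.Walk.fst_mem_support_of_mem_edges _ h1
          have ha' := SimpleGraph.Walk.fst_mem_support_of_mem_edges _ h2
          exact (reach_of_walk (q d) (hqH d hd) ha').trans
            (reach_of_walk p.2.2 (hpH p hp) ha).symm
      · exact hrD _ h
      · exact (hrD _ h).trans hends.symm
    rcases hv with rfl | rfl
    · exact hr1
    · exact hr1.trans hends
  have hT0f : (symmDiff T1 D).Finite := hT1f.symmDiff hD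
  have hT0e : Even (symmDiff T1 D).ncard := by
    rw [even_symm _ _ hT1f hD]; exact ⟨fun _ => hDe, fun _ => hT1e⟩
  have hj : H.HasTJoin (symmDiff T1 D) := by
    rcases reach_join H r (symmDiff T1 D) (by
      rintro t (ht | ht)
      · exact hrT1 t ht.1
      · exact hrD t ht.1) with h | ⟨P', h⟩
    · exact h
    · exfalso
      have h2 := even_join h (hT0f.symmDiff (Set.finite_singleton r))
      rw [even_symm _ _ hT0f (Set.finite_singleton r), Set.ncard_singleton] at h2
      exact absurd (h2.mp hT0e) (by decide)
  obtain ⟨P1, hP1a, hP1b, hP1c⟩ := hj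
  let φ : (Σ u : V, Σ v : V, H.Walk u v) → (Σ u : V, Σ v : V, G.Walk u v) :=
    fun p => ⟨p.1, p.2.1, p.2.2.mapLe hHG⟩
  have hφe : ∀ p, (φ p).2.2.edges = p.2.2.edges := by
    intro p
    simp [φ]
  have hφH : ∀ p, ∀ e ∈ (φ p).2.2.edges, e ∈ EH := by
    intro p e he
    rw [hφe] at he
    rw [← hHe]; exact SimpleGraph.Walk.edges_subset_edgeSet _ he
  have hDT : ∀ d ∈ D, d ∈ T → d ∈ T1 := by
    intro d hd hdT
    obtain ⟨p, ⟨hp, h⟩, _⟩ := hP3 d hdT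
    refine ⟨p, ⟨hp, ?_⟩, h⟩
    rcases h with rfl | rfl
    · exact Or.inr (Or.inl hd)
    · exact Or.inr (Or.inr hd)
  have hcross : ∀ p ∈ P, p ∉ P0 → ∀ e ∈ p.2.2.edges, e ∉ EH := by
    rintro p hp hp0 e he (h | ⟨p', hp', h⟩)
    · exact hp0 ⟨hp, Or.inl ⟨e, he, h⟩⟩
    · exact hP2 p hp p' hp'.1 (by rintro rfl; exact hp0 hp') e he h
  have hcompl : ∀ p ∈ P, p ∉ P0 → ∀ v, (p.1 = v ∨ p.2.1 = v) → v ∈ T ∧ v ∉ T1 := by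
    intro p hp hp0 v hv
    have hvT : v ∈ T := by
      have := hP1 p hp
      rcases hv with rfl | rfl
      · exact this.2.2.1
      · exact this.2.2.2
    refine ⟨hvT, ?_⟩
    rintro ⟨p', hp', hv'⟩
    have := (hP3 v hvT).unique ⟨hp, hv⟩ ⟨hp'.1, hv'⟩
    exact hp0 (this ▸ hp')
  have hsplit : ∀ v, v ∈ symmDiff T D ↔ (v ∈ T ∧ v ∉ T1) ∨ v ∈ symmDiff T1 D := by
    intro v
    have a := hDT v
    have b : v ∈ T1 → v ∈ T := fun h => hT1T h
    simp only [Set.mem_symmDiff]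
    tauto
  have hdisj : ∀ v, (v ∈ T ∧ v ∉ T1) → v ∉ symmDiff T1 D := by
    intro v
    have a := hDT v
    simp only [Set.mem_symmDiff]
    tauto
  refine ⟨{p | (p ∈ P ∧ p ∉ P0) ∨ ∃ p' ∈ P1, φ p' = p}, ?_, ?_, ?_⟩
  · rintro p (⟨hp, hp0⟩ | ⟨p, hp, rfl⟩)
    · have h := hP1 p hp
      exact ⟨h.1, h.2.1, (hsplit _).mpr (Or.inl (hcompl p hp hp0 _ (Or.inl rfl))),
        (hsplit _).mpr (Or.inl (hcompl p hp hp0 _ (Or.inr rfl)))⟩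
    · have h := hP1a p hp
      exact ⟨h.1.mapLe hHG, h.2.1, (hsplit _).mpr (Or.inr h.2.2.1),
        (hsplit _).mpr (Or.inr h.2.2.2)⟩
  · rintro p (⟨hp, hp0⟩ | ⟨p, hp, rfl⟩) p' (⟨hp', hp0'⟩ | ⟨p', hp', rfl⟩) hne e he he'
    · exact hP2 p hp p' hp' hne e he he'
    · exact hcross p hp hp0 e he (hφH _ e he')
    · exact hcross p' hp' hp0' e he' (hφH _ e he)
    · rw [hφe] at he he'
      exact hP1b p hp p' hp' (by rintro rfl; exact hne rfl) e he he'
  · intro t ht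
    rcases (hsplit t).mp ht with h | h
    · obtain ⟨p, ⟨hp, hpt⟩, hu⟩ := hP3 t h.1
      refine ⟨p, ⟨Or.inl ⟨hp, fun hp0 => h.2 ⟨p, hp0, hpt⟩⟩, hpt⟩, ?_⟩
      rintro p' ⟨⟨hp', hp0'⟩ | ⟨p', hp', rfl⟩, hpt'⟩
      · exact hu p' ⟨hp', hpt'⟩
      · exfalso
        refine hdisj t h ?_
        have := hP1a p' hp'
        rcases hpt' with h | h
        · exact h ▸ this.2.2.1
        · exact h ▸ this.2.2.2
    · obtain ⟨p, ⟨hp, hpt⟩, hu⟩ := hP1c t h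
      refine ⟨φ p, ⟨Or.inr ⟨p, hp, rfl⟩, hpt⟩, ?_⟩
      rintro p' ⟨⟨hp', hp0'⟩ | ⟨p', hp', rfl⟩, hpt'⟩
      · exact absurd h (hdisj t (hcompl p' hp' hp0' t hpt'))
      · rw [hu p' ⟨hp', hpt'⟩]

end TJ

/-- If `T △ T'` is finite and the connected graph `G` has neither a `T`-join nor a
`T'`-join, then `|T △ T'|` is even. -/
theorem even_symmDiff_of_not_hasTJoin {V : Type*} (G : SimpleGraph V)
    (hG : G.Connected) (T T' : Set V) (hfin : (symmDiff T T').Finite)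
    (hT : ¬ G.HasTJoin T) (hT' : ¬ G.HasTJoin T') :
    Even (symmDiff T T').ncard := by
  by_contra hodd
  obtain ⟨r⟩ := hG.nonempty
  have h1 := (TJ.reach_join G r T (fun t _ => hG.preconnected r t)).resolve_left hT
  have h2 := TJ.modify G hG _ (symmDiff (symmDiff T T') {r})
    (hfin.symmDiff (Set.finite_singleton r)) (by
      rw [TJ.even_symm _ _ hfin (Set.finite_singleton r), Set.ncard_singleton]
      exact ⟨fun h => absurd h hodd, fun h => absurd h (by decide)⟩) h1
  have h3 : symmDiff (symmDiff T {r}) (symmDiff (symmDiff T T') {r}) = T' := by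
    rw [symmDiff_symmDiff_symmDiff_comm, symmDiff_symmDiff_cancel_left, symmDiff_self]
    simp
  rw [h3] at h2
  exact hT' h2
end
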